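/- Let A ⊆ B be an aperiodic C*-inclusion and let J be a closed two-sided ideal of B. Then J ∩ A = {0} if and only if every element x ∈ J satisfies Kishimoto's condition as an element of the A-bimodule J with the norm of B: for every hereditary C*-subalgebra D of A and every ε > 0 there is a positive a ∈ D with ‖a‖ = 1 and ‖a x a‖ < ε. -/

import Mathlib

/-- A closed (ring-theoretic) two-sided ideal of `B`. -/
def IsClosedTwoSidedIdeal {B : Type*} [NonUnitalCStarAlgebra B] (S : Set B) : Prop :=
  IsClosed S ∧ (0 : B) ∈ S ∧ (∀ x ∈ S, ∀ y ∈ S, x + y ∈ S) ∧ (∀ x ∈ S, -x ∈ S) ∧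
    (∀ b : B, ∀ x ∈ S, b * x ∈ S) ∧ ∀ b : B, ∀ x ∈ S, x * b ∈ S

/-- A closed *-subalgebra of `B`. -/
def IsCStarSubalgebra {B : Type*} [NonUnitalCStarAlgebra B] (A : Set B) : Prop :=
  IsClosed A ∧ (0 : B) ∈ A ∧ (∀ x ∈ A, ∀ y ∈ A, x + y ∈ A) ∧
    (∀ (c : ℂ), ∀ x ∈ A, c • x ∈ A) ∧ (∀ x ∈ A, ∀ y ∈ A, x * y ∈ A) ∧ ∀ x ∈ A, star x ∈ A

/-- A hereditary C*-subalgebra `D` of the subalgebra `A ⊆ B`: a nonzero closed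
*-subalgebra of `A` such that `a ∈ D`, `b ∈ A`, `0 ≤ b ≤ a` imply `b ∈ D`. -/
def IsHereditarySubalgebraIn {B : Type*} [NonUnitalCStarAlgebra B] [PartialOrder B]
    [StarOrderedRing B] (A D : Set B) : Prop :=
  D ⊆ A ∧ IsClosed D ∧ (∃ x ∈ D, x ≠ 0) ∧ (0 : B) ∈ D ∧
    (∀ x ∈ D, ∀ y ∈ D, x + y ∈ D) ∧ (∀ (c : ℂ), ∀ x ∈ D, c • x ∈ D) ∧
    (∀ x ∈ D, ∀ y ∈ D, x * y ∈ D) ∧ (∀ x ∈ D, star x ∈ D) ∧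
    ∀ a ∈ D, ∀ b ∈ A, 0 ≤ b → b ≤ a → b ∈ D

/-- The C*-inclusion `A ⊆ B` is aperiodic: every element of `B` satisfies Kishimoto's
condition modulo `A`. -/
def IsAperiodicInclusion {B : Type*} [NonUnitalCStarAlgebra B] [PartialOrder B]
    [StarOrderedRing B] (A : Set B) : Prop :=
  ∀ x : B, ∀ D : Set B, IsHereditarySubalgebraIn A D → ∀ ε : ℝ, 0 < ε →
    ∃ a ∈ D, 0 ≤ a ∧ ‖a‖ = 1 ∧ ∃ y ∈ A, ‖a * x * a - y‖ < ε

/-!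
If `J ∩ A = {0}`, the quotient map `B → B ⧸ J` is isometric on `A`. This is proved without
forming the quotient: if `y ∈ A`, `j ∈ J` and `‖y - j‖ < s < ‖y‖`, then `J` contains a positive
element dominating a multiple of the square of `d = (y⋆y - s²)₊ ∈ A`, so the heredity of closed
ideals puts `d ≠ 0` in `J`. Hence, when `a * x * a ∈ J` is close to `y ∈ A`, both `y` and
`a * x * a` are small.

Conversely, a nonzero positive `c ∈ A` violates Kishimoto's condition on the elements of `A` for
which `min (c / s, 1)` is a unit, where `0 < s < ‖c‖`: compressing `c` by such an element of norm
one leaves a norm of at least `s`.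
-/

open Set

section BundledForms

variable {B : Type*} [NonUnitalCStarAlgebra B]

lemma IsCStarSubalgebra.exists_coe_eq {A : Set B} (hA : IsCStarSubalgebra A) :
    ∃ S : NonUnitalStarSubalgebra ℂ B, IsClosed (S : Set B) ∧ (S : Set B) = A := by
  obtain ⟨hclosed, hzero, hadd, hsmul, hmul, hstar⟩ := hA
  exact ⟨{ carrier := A
           zero_mem' := hzero
           add_mem' := fun hx hy ↦ hadd _ hx _ hy
           mul_mem' := fun hx hy ↦ hmul _ hx _ hy
           smul_mem' := hsmul
           star_mem' := hstar _ }, hclosed, rfl⟩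

lemma IsClosedTwoSidedIdeal.exists_coe_eq {J : Set B} (hJ : IsClosedTwoSidedIdeal J) :
    ∃ I : TwoSidedIdeal B, IsClosed (I : Set B) ∧ (I : Set B) = J := by
  obtain ⟨hclosed, hzero, hadd, hneg, hmul_left, hmul_right⟩ := hJ
  have hcoe := TwoSidedIdeal.coe_mk' J hzero (hadd _ · _ ·) (hneg _) (hmul_left _ _ ·)
    (hmul_right _ _ ·)
  exact ⟨_, hcoe.symm ▸ hclosed, hcoe⟩

end BundledForms

section Heredity

variable {B : Type*} [NonUnitalCStarAlgebra B] [PartialOrder B] [StarOrderedRing B]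

lemma norm_sub_mul_le_of_star_mul_self_le {z q : B} (h : star z * z ≤ star q * q) (u : B) :
    ‖z - z * u‖ ≤ ‖q - q * u‖ := by
  obtain ⟨v, hv⟩ := CStarAlgebra.nonneg_iff_eq_star_mul_self.mp (sub_nonneg.mpr h)
  have hsplit : star (q - q * u) * (q - q * u) - star (z - z * u) * (z - z * u)
      = star (v - v * u) * (v - v * u) := by
    have hexpand (x : B) : star (x - x * u) * (x - x * u)
        = star x * x - star x * x * u - star u * (star x * x) + star u * (star x * x) * u := by
      simp only [star_sub, star_mul]
      noncomm_ring
    rw [hexpand, hexpand, hexpand, ← hv]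
    noncomm_ring
  have hle : star (z - z * u) * (z - z * u) ≤ star (q - q * u) * (q - q * u) :=
    sub_nonneg.mp (hsplit ▸ star_mul_self_nonneg _)
  have hnorm := CStarAlgebra.norm_le_norm_of_nonneg_of_le (star_mul_self_nonneg _) hle
  rw [CStarRing.norm_star_mul_self, CStarRing.norm_star_mul_self] at hnorm
  exact (mul_self_le_mul_self_iff (norm_nonneg _) (norm_nonneg _)).mpr hnorm

lemma exists_continuous_norm_sqrt_sub_sqrt_mul_le {ε : ℝ} (hε : 0 < ε) :
    ∃ k : ℝ → ℝ, Continuous k ∧ k 0 = 0 ∧ ∀ t, 0 ≤ t → ‖√t - √t * (k t * t)‖ ≤ ε := by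
  have hmax (t : ℝ) : max t (ε ^ 2) ^ 2 ≠ 0 := by positivity
  refine ⟨fun t ↦ t / max t (ε ^ 2) ^ 2, by fun_prop (disch := assumption), by simp,
    fun t ht ↦ ?_⟩
  rcases le_total t (ε ^ 2) with hsmall | hlarge
  · have hratio : t / max t (ε ^ 2) ^ 2 * t = (t / ε ^ 2) ^ 2 := by
      rw [max_eq_right hsmall]
      ring
    have hnonneg : 0 ≤ (t / ε ^ 2) ^ 2 := by positivity
    have hle_one : (t / ε ^ 2) ^ 2 ≤ 1 :=
      pow_le_one₀ (by positivity) ((div_le_one (by positivity)).mpr hsmall)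
    calc ‖√t - √t * (t / max t (ε ^ 2) ^ 2 * t)‖
        = √t * (1 - (t / ε ^ 2) ^ 2) := by
          rw [hratio, ← mul_one_sub,
            Real.norm_of_nonneg (mul_nonneg (Real.sqrt_nonneg t) (sub_nonneg.mpr hle_one))]
      _ ≤ √t := mul_le_of_le_one_right (Real.sqrt_nonneg t) (sub_le_self 1 hnonneg)
      _ ≤ ε := Real.sqrt_le_iff.mpr ⟨hε.le, hsmall⟩
  · have ht_pos : 0 < t := (pow_pos hε 2).trans_le hlarge
    have hone : t / max t (ε ^ 2) ^ 2 * t = 1 := by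
      rw [max_eq_left hlarge]
      field_simp
    simpa [hone] using hε.le

/- With `u = k(p) p` close to a unit for `√p`, the element `z u` of `B p` is close to `z`. -/
theorem mem_closure_range_mul_of_star_mul_self_le {z p : B} (h : star z * z ≤ p) :
    z ∈ closure (range (· * p)) := by
  refine Metric.mem_closure_range_iff.mpr fun ε hε ↦ ?_
  have hp : 0 ≤ p := (star_mul_self_nonneg z).trans h
  obtain ⟨k, hk, hk0, hbound⟩ := exists_continuous_norm_sqrt_sub_sqrt_mul_le (half_pos hε)
  refine ⟨z * cfcₙ k p, ?_⟩
  set q := cfcₙ Real.sqrt p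
  have hq : star q * q = p := by
    rw [(IsSelfAdjoint.cfcₙ : IsSelfAdjoint q).star_eq,
      ← cfcₙ_mul _ _ p (by fun_prop) (by simp) (by fun_prop) (by simp)]
    exact (cfcₙ_congr fun t ht ↦
      Real.mul_self_sqrt (quasispectrum_nonneg_of_nonneg p hp t ht)).trans (cfcₙ_id' ℝ p)
  have hqu : q - q * (cfcₙ k p * p) = cfcₙ (fun t ↦ √t - √t * (k t * t)) p := by
    rw [cfcₙ_sub _ _ p (by fun_prop) (by simp) (by fun_prop) (by simp),
      cfcₙ_mul _ _ p (by fun_prop) (by simp) (by fun_prop) (by simp),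
      cfcₙ_mul _ _ p (by fun_prop) hk0 (by fun_prop) rfl, cfcₙ_id' ℝ p]
  calc dist z (z * cfcₙ k p * p)
      = ‖z - z * (cfcₙ k p * p)‖ := by rw [dist_eq_norm, mul_assoc]
    _ ≤ ‖q - q * (cfcₙ k p * p)‖ :=
        norm_sub_mul_le_of_star_mul_self_le (h.trans_eq hq.symm) _
    _ ≤ ε / 2 := by
        rw [hqu]
        exact norm_cfcₙ_le fun t ht ↦ hbound t (quasispectrum_nonneg_of_nonneg p hp t ht)
    _ < ε := half_lt_self hε

lemma mem_twoSidedIdeal_of_star_mul_self_le {J : TwoSidedIdeal B} (hJ : IsClosed (J : Set B))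
    {z p : B} (hp : p ∈ J) (h : star z * z ≤ p) : z ∈ J :=
  closure_minimal (range_subset_iff.mpr fun b ↦ J.mul_mem_left b p hp) hJ
    (mem_closure_range_mul_of_star_mul_self_le h)

lemma star_mem_twoSidedIdeal {J : TwoSidedIdeal B} (hJ : IsClosed (J : Set B)) {x : B}
    (hx : x ∈ J) : star x ∈ J :=
  mem_twoSidedIdeal_of_star_mul_self_le hJ (J.mul_mem_right x (star x) hx)
    (by rw [star_star])

end Heredity

section Cutdown

variable {B : Type*} [NonUnitalCStarAlgebra B]

/-- The cutdown `(c - s)₊` of a self-adjoint element `c` at the level `s`. It is meant for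
`0 ≤ s`: otherwise the function does not vanish at `0` and the non-unital functional calculus
returns `0`. -/
noncomputable def cutdown (s : ℝ) (c : B) : B := cfcₙ (fun t : ℝ ↦ max (t - s) 0) c

lemma isSelfAdjoint_cutdown (s : ℝ) (c : B) : IsSelfAdjoint (cutdown s c) :=
  IsSelfAdjoint.cfcₙ

lemma cutdown_mem {A : NonUnitalStarSubalgebra ℂ B} (hA : IsClosed (A : Set B)) (s : ℝ) {c : B}
    (hc : c ∈ A) : cutdown s c ∈ A :=
  haveI : IsClosed (A : Set B) := hA
  cfcₙ_mem (𝕜' := ℂ) _ hc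

variable [PartialOrder B] [StarOrderedRing B]

lemma cutdown_ne_zero {c : B} (hc : 0 ≤ c) {s : ℝ} (hs : 0 ≤ s) (hsc : s < ‖c‖) :
    cutdown s c ≠ 0 := by
  intro hzero
  suffices hnorm : ‖cfcₙ (fun t : ℝ ↦ t) c‖ ≤ s from hsc.not_ge (cfcₙ_id' ℝ c ▸ hnorm)
  refine norm_cfcₙ_le fun t ht ↦ ?_
  have hmax : max (t - s) 0 = 0 := by
    have := norm_apply_le_norm_cfcₙ (fun t : ℝ ↦ max (t - s) 0) c ht (by fun_prop) (by simp [hs])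
    rwa [← cutdown, hzero, norm_zero, norm_le_zero_iff] at this
  rw [Real.norm_of_nonneg (quasispectrum_nonneg_of_nonneg c hc t ht)]
  exact sub_nonpos.mp (max_eq_right_iff.mp hmax)

lemma smul_cutdown_mul_self_le {c : B} (hc : IsSelfAdjoint c) {s : ℝ} (hs : 0 ≤ s) :
    s • (cutdown s c * cutdown s c) ≤ cutdown s c * c * cutdown s c := by
  set f : ℝ → ℝ := fun t ↦ max (t - s) 0
  have hf : Continuous f := by fun_prop
  have hf0 : f 0 = 0 := by simp [f, hs]
  have hleft : s • (cutdown s c * cutdown s c) = cfcₙ (fun t ↦ s * (f t * f t)) c := by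
    rw [cfcₙ_const_mul s (fun t ↦ f t * f t) c (by fun_prop) (by simp [hf0]),
      cfcₙ_mul f f c hf.continuousOn hf0 hf.continuousOn hf0, cutdown]
  have hright : cutdown s c * c * cutdown s c = cfcₙ (fun t ↦ f t * t * f t) c := by
    rw [cfcₙ_mul (fun t ↦ f t * t) f c (by fun_prop) (by simp) hf.continuousOn hf0,
      cfcₙ_mul f (fun t ↦ t) c hf.continuousOn hf0 (by fun_prop) rfl, cfcₙ_id' ℝ c, cutdown]
  rw [hleft, hright]
  refine cfcₙ_mono (fun t _ ↦ ?_) (by fun_prop) (by fun_prop) (by simp [hf0]) (by simp)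
  rcases le_total t s with hts | hst
  · simp [f, hts]
  · calc s * (f t * f t) ≤ t * (f t * f t) :=
        mul_le_mul_of_nonneg_right hst (mul_self_nonneg _)
      _ = f t * t * f t := by ring

end Cutdown

section Isometry

variable {B : Type*} [NonUnitalCStarAlgebra B] [PartialOrder B] [StarOrderedRing B]

lemma cutdown_mem_twoSidedIdeal {J : TwoSidedIdeal B} (hJ : IsClosed (J : Set B)) {c w : B}
    (hc : IsSelfAdjoint c) (hw : IsSelfAdjoint w) (hcw : c - w ∈ J) {s : ℝ} (hws : ‖w‖ < s) :
    cutdown s c ∈ J := by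
  set d := cutdown s c
  have hd : star d = d := isSelfAdjoint_cutdown s c
  have hgap : 0 < s - ‖w‖ := sub_pos.mpr hws
  have hupper : d * w * d ≤ ‖w‖ • (d * d) := by
    simpa only [hd] using CStarAlgebra.star_left_conjugate_le_norm_smul (a := d) hw
  have hscaled : (s - ‖w‖) • (d * d) ≤ d * (c - w) * d :=
    calc (s - ‖w‖) • (d * d) = s • (d * d) - ‖w‖ • (d * d) := sub_smul ..
      _ ≤ d * c * d - d * w * d :=
        sub_le_sub (smul_cutdown_mul_self_le hc ((norm_nonneg w).trans hws.le)) hupper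
      _ = d * (c - w) * d := by rw [mul_sub, sub_mul]
  have hbound : star d * d ≤ (s - ‖w‖)⁻¹ • d * (c - w) * d := by
    rwa [hd, smul_mul_assoc, smul_mul_assoc, le_inv_smul_iff_of_pos hgap]
  exact mem_twoSidedIdeal_of_star_mul_self_le hJ
    (J.mul_mem_right _ d (J.mul_mem_left _ _ hcw)) hbound

/- For `c = y⋆y` and `w = (y - j)⋆(y - j)`, a cutdown of `c` between `‖w‖` and `‖c‖` would be a
nonzero element of `J ∩ A`. -/
theorem norm_le_norm_sub_of_inter_eq_zero {A : NonUnitalStarSubalgebra ℂ B} {J : TwoSidedIdeal B}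
    (hA : IsClosed (A : Set B)) (hJ : IsClosed (J : Set B)) (hJA : (J ∩ A : Set B) = {0})
    {y j : B} (hy : y ∈ A) (hj : j ∈ J) : ‖y‖ ≤ ‖y - j‖ := by
  by_contra! hlt
  set c := star y * y
  set w := star (y - j) * (y - j)
  have hwc : ‖w‖ < ‖c‖ := by
    rw [CStarRing.norm_star_mul_self, CStarRing.norm_star_mul_self]
    gcongr
  have hcw : c - w ∈ J := by
    have hfactor : c - w = star y * j + star j * (y - j) := by
      simp only [c, w, star_sub]
      noncomm_ring
    rw [hfactor]
    exact J.add_mem (J.mul_mem_left _ _ hj) (J.mul_mem_right _ _ (star_mem_twoSidedIdeal hJ hj))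
  obtain ⟨s, hws, hsc⟩ := exists_between hwc
  have hdJ : cutdown s c ∈ J :=
    cutdown_mem_twoSidedIdeal hJ (.star_mul_self y) (.star_mul_self (y - j)) hcw hws
  have hdA : cutdown s c ∈ A := cutdown_mem hA s (mul_mem (star_mem hy) hy)
  have hd0 : cutdown s c ∈ ({0} : Set B) := hJA ▸ ⟨hdJ, hdA⟩
  exact cutdown_ne_zero (star_mul_self_nonneg y) ((norm_nonneg w).trans hws.le) hsc hd0

end Isometry

section LocalUnit

variable {B : Type*} [NonUnitalCStarAlgebra B]

/-- The C⋆-subalgebra of all elements for which a given self-adjoint `g` is a two-sided unit.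
Its intersections with C⋆-subalgebras `A`, not necessarily containing `g`, provide hereditary
subalgebras of `A`. -/
def localUnitSubalgebra (g : B) (hg : IsSelfAdjoint g) : NonUnitalStarSubalgebra ℂ B where
  carrier := {d | g * d = d ∧ d * g = d}
  zero_mem' := ⟨mul_zero g, zero_mul g⟩
  add_mem' := fun ⟨hgx, hxg⟩ ⟨hgy, hyg⟩ ↦
    ⟨by rw [mul_add, hgx, hgy], by rw [add_mul, hxg, hyg]⟩
  mul_mem' := fun ⟨hgx, _⟩ ⟨_, hyg⟩ ↦ ⟨by rw [← mul_assoc, hgx], by rw [mul_assoc, hyg]⟩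
  smul_mem' := fun r _ ⟨hgx, hxg⟩ ↦
    ⟨by rw [mul_smul_comm, hgx], by rw [smul_mul_assoc, hxg]⟩
  star_mem' := fun ⟨hgx, hxg⟩ ↦
    ⟨by simpa [hg.star_eq] using congrArg star hxg, by simpa [hg.star_eq] using congrArg star hgx⟩

variable {g : B} {hg : IsSelfAdjoint g}

lemma mem_localUnitSubalgebra {d : B} :
    d ∈ localUnitSubalgebra g hg ↔ g * d = d ∧ d * g = d :=
  Iff.rfl

lemma mem_localUnitSubalgebra_of_isSelfAdjoint {d : B} (hd : IsSelfAdjoint d) (hgd : g * d = d) :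
    d ∈ localUnitSubalgebra g hg :=
  ⟨hgd, by simpa [hg.star_eq, hd.star_eq] using congrArg star hgd⟩

lemma isClosed_localUnitSubalgebra : IsClosed (localUnitSubalgebra g hg : Set B) :=
  (isClosed_eq (by fun_prop) (by fun_prop)).inter (isClosed_eq (by fun_prop) (by fun_prop))

variable [PartialOrder B] [StarOrderedRing B]

lemma mem_localUnitSubalgebra_of_le {a b : B} (ha : a ∈ localUnitSubalgebra g hg) (hb : 0 ≤ b)
    (hba : b ≤ a) : b ∈ localUnitSubalgebra g hg := by
  obtain ⟨v, rfl⟩ := CStarAlgebra.nonneg_iff_eq_star_mul_self.mp hb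
  obtain ⟨q, rfl⟩ := CStarAlgebra.nonneg_iff_eq_star_mul_self.mp (hb.trans hba)
  have hq : q - q * g = 0 := by
    rw [← CStarRing.star_mul_self_eq_zero_iff]
    have hexpand : star (q - q * g) * (q - q * g)
        = star q * q - star q * q * g - g * (star q * q - star q * q * g) := by
      simp only [star_sub, star_mul, hg.star_eq]
      noncomm_ring
    rw [hexpand, (mem_localUnitSubalgebra.mp ha).2, sub_self, mul_zero, sub_zero]
  have hv : v * g = v := by
    have := norm_sub_mul_le_of_star_mul_self_le hba g
    rw [hq, norm_zero, norm_le_zero_iff, sub_eq_zero] at this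
    exact this.symm
  refine mem_localUnitSubalgebra_of_isSelfAdjoint (.star_mul_self v) ?_
  have hgv : g * star v = star v := by simpa [hg.star_eq] using congrArg star hv
  rw [← mul_assoc, hgv]

lemma isHereditarySubalgebraIn_inter_localUnitSubalgebra {A : NonUnitalStarSubalgebra ℂ B}
    (hA : IsClosed (A : Set B)) (hne : ∃ d ∈ A ⊓ localUnitSubalgebra g hg, d ≠ 0) :
    IsHereditarySubalgebraIn (A : Set B) (A ∩ localUnitSubalgebra g hg : Set B) :=
  let D := A ⊓ localUnitSubalgebra g hg
  ⟨inter_subset_left, hA.inter isClosed_localUnitSubalgebra, hne, D.zero_mem,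
    fun _ hx _ hy ↦ D.add_mem hx hy, fun r _ hx ↦ D.smul_mem r hx,
    fun _ hx _ hy ↦ D.mul_mem hx hy, fun _ hx ↦ star_mem (s := D) hx,
    fun _ ha _ hbA hb hba ↦ ⟨hbA, mem_localUnitSubalgebra_of_le ha.2 hb hba⟩⟩

lemma exists_cutdown_mem_localUnitSubalgebra {c : B} (hc : IsSelfAdjoint c) {s : ℝ} (hs : 0 < s) :
    ∃ (g : B) (hg : IsSelfAdjoint g), s • g ≤ c ∧ cutdown s c ∈ localUnitSubalgebra g hg := by
  have hmin : cfcₙ (fun t : ℝ ↦ s * min (s⁻¹ * t) 1) c ≤ cfcₙ (fun t : ℝ ↦ t) c :=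
    cfcₙ_mono fun t _ ↦ by
      calc s * min (s⁻¹ * t) 1 ≤ s * (s⁻¹ * t) := by gcongr; exact min_le_left _ _
        _ = t := mul_inv_cancel_left₀ hs.ne' t
  have hunit (t : ℝ) : min (s⁻¹ * t) 1 * max (t - s) 0 = max (t - s) 0 := by
    rcases le_total t s with hts | hst
    · rw [max_eq_right (sub_nonpos.mpr hts), mul_zero]
    · have hone : 1 ≤ s⁻¹ * t := by rwa [inv_mul_eq_div, one_le_div hs]
      rw [min_eq_right hone, one_mul]
  refine ⟨cfcₙ (fun t : ℝ ↦ min (s⁻¹ * t) 1) c, .cfcₙ, ?_,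
    mem_localUnitSubalgebra_of_isSelfAdjoint (isSelfAdjoint_cutdown s c) ?_⟩
  · rwa [cfcₙ_const_mul s _ c (by fun_prop) (by simp), cfcₙ_id' ℝ c] at hmin
  · rw [cutdown, ← cfcₙ_mul _ _ c (by fun_prop) (by simp) (by fun_prop) (by simp [hs.le])]
    simp only [hunit]

lemma le_norm_conjugate_of_smul_le {c : B} {s : ℝ} (hs : 0 ≤ s) (hgc : s • g ≤ c) {a : B}
    (ha : IsSelfAdjoint a) (ha_norm : ‖a‖ = 1) (hga : g * a = a) :
    s ≤ ‖a * c * a‖ := by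
  have haa : 0 ≤ s • (a * a) := smul_nonneg hs ha.mul_self_nonneg
  have hle : s • (a * a) ≤ a * c * a := by
    simpa [mul_assoc, mul_smul_comm, smul_mul_assoc, hga, ha.star_eq]
      using star_left_conjugate_le_conjugate hgc a
  calc s = ‖s • (a * a)‖ := by
        rw [norm_smul, Real.norm_of_nonneg hs, ha.norm_mul_self, ha_norm, one_pow, mul_one]
    _ ≤ ‖a * c * a‖ := CStarAlgebra.norm_le_norm_of_nonneg_of_le haa hle

end LocalUnit

section Kishimoto

variable {B : Type*} [NonUnitalCStarAlgebra B] [PartialOrder B] [StarOrderedRing B]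

/-- Kishimoto's condition on `x` over the C⋆-subalgebra `A`, for the norm of `B`. -/
def KishimotoCondition (A : Set B) (x : B) : Prop :=
  ∀ D : Set B, IsHereditarySubalgebraIn A D → ∀ ε : ℝ, 0 < ε →
    ∃ a ∈ D, 0 ≤ a ∧ ‖a‖ = 1 ∧ ‖a * x * a‖ < ε

theorem KishimotoCondition.eq_zero_of_nonneg {A : NonUnitalStarSubalgebra ℂ B}
    (hA : IsClosed (A : Set B)) {c : B} (hK : KishimotoCondition (A : Set B) c) (hcA : c ∈ A)
    (hc : 0 ≤ c) : c = 0 := by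
  by_contra hc0
  obtain ⟨s, hs, hsc⟩ := exists_between (norm_pos_iff.mpr hc0)
  obtain ⟨g, hg, hgc, hunit⟩ := exists_cutdown_mem_localUnitSubalgebra hc.isSelfAdjoint hs
  have hD : IsHereditarySubalgebraIn (A : Set B) (A ∩ localUnitSubalgebra g hg : Set B) :=
    isHereditarySubalgebraIn_inter_localUnitSubalgebra hA
      ⟨cutdown s c, ⟨cutdown_mem hA s hcA, hunit⟩, cutdown_ne_zero hc hs.le hsc⟩
  obtain ⟨a, ⟨-, hga, -⟩, ha, ha_norm, hsmall⟩ := hK _ hD s hs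
  exact (le_norm_conjugate_of_smul_le hs.le hgc ha.isSelfAdjoint ha_norm hga).not_gt hsmall

theorem IsAperiodicInclusion.kishimotoCondition {A : NonUnitalStarSubalgebra ℂ B}
    {J : TwoSidedIdeal B} (hap : IsAperiodicInclusion (A : Set B)) (hA : IsClosed (A : Set B))
    (hJ : IsClosed (J : Set B)) (hJA : (J ∩ A : Set B) = {0}) {x : B} (hx : x ∈ J) :
    KishimotoCondition (A : Set B) x := by
  intro D hD ε hε
  obtain ⟨a, haD, ha, ha_norm, y, hy, hdist⟩ := hap x D hD (ε / 2) (half_pos hε)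
  refine ⟨a, haD, ha, ha_norm, ?_⟩
  have haxa : a * x * a ∈ J := J.mul_mem_right _ a (J.mul_mem_left a x hx)
  calc ‖a * x * a‖ ≤ ‖a * x * a - y‖ + ‖y‖ := norm_le_norm_sub_add _ _
    _ ≤ ‖a * x * a - y‖ + ‖a * x * a - y‖ := by
      gcongr
      exact norm_sub_rev y _ ▸ norm_le_norm_sub_of_inter_eq_zero hA hJ hJA hy haxa
    _ < ε := by linarith

end Kishimoto

/-- For an aperiodic C*-inclusion `A ⊆ B` and a closed two-sided ideal
`J` of `B`: `J ∩ A = {0}` iff every `x ∈ J` satisfies Kishimoto's condition as an element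
of the `A`-bimodule `J`. -/
theorem aperiodic_inclusion_trivial_ideal_iff_kishimoto
    {B : Type*} [NonUnitalCStarAlgebra B] [PartialOrder B] [StarOrderedRing B]
    (A J : Set B) (hA : IsCStarSubalgebra A) (hA0 : ∃ x ∈ A, x ≠ 0)
    (hap : IsAperiodicInclusion A) (hJ : IsClosedTwoSidedIdeal J) :
    J ∩ A = {0} ↔
      ∀ x ∈ J, ∀ D : Set B, IsHereditarySubalgebraIn A D → ∀ ε : ℝ, 0 < ε →
        ∃ a ∈ D, 0 ≤ a ∧ ‖a‖ = 1 ∧ ‖a * x * a‖ < ε := by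
  obtain ⟨A, hA_closed, rfl⟩ := hA.exists_coe_eq
  obtain ⟨J, hJ_closed, rfl⟩ := hJ.exists_coe_eq
  refine ⟨fun hJA x hx ↦ hap.kishimotoCondition hA_closed hJ_closed hJA hx, fun hK ↦ ?_⟩
  refine eq_singleton_iff_unique_mem.mpr ⟨⟨J.zero_mem, A.zero_mem⟩, fun x ⟨hxJ, hxA⟩ ↦ ?_⟩
  have hxx : KishimotoCondition (A : Set B) (star x * x) := hK _ (J.mul_mem_left (star x) x hxJ)
  rw [← CStarRing.star_mul_self_eq_zero_iff]
  exact hxx.eq_zero_of_nonneg hA_closed (mul_mem (star_mem hxA) hxA) (star_mul_self_nonneg x)
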